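/- Let G = (V,E) be a finite multigraph with vertex weights q_v and flag momenta p_f ∈ ℝ^d, and let e be a semi-regular edge (not a self-loop) joining distinct vertices v₁ and v₂. Then the generalized second Symanzik polynomial satisfies 𝒱_G(α,q,p) = α_e · 𝒱_{G−e}(α,q,p) + 𝒱_{G/e}(α,q,p), where in G/e the merged vertex carries the weight q_{v₁}+q_{v₂} and the union of the flags of v₁ and v₂. -/

import Mathlib

/-!
Subsets of `E` split as `B` and `insert e B` with `B` a set of edges of `G - e` (equivalently, of
`G / e`). Apart from the product of the `α f` with `f ∉ A`, the summand of `genV` at a forest `A`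
depends on the graph only through the map sending a
vertex to its component (`compVal`), and up to a bijection of the set of components.

* For `A = B`, the components of `(V, B)` are the same in `G` and `G - e`, and the edge `e ∉ A`
  contributes the extra factor `α e` (`reach_delete`, `prod_compl_lift`).
* For `A = insert e B`, the components of `(V, A)` in `G` correspond to the components of `B` in
  `G / e` (`reach_contract`), the weights and flags being collected in two steps instead of one
  (`compVal_comp`).

That `B` is a forest in `G - e` iff it is one in `G` is immediate. That `B` is a forest in `G / e`
iff `insert e B` is one in `G` needs an argument for the edge `e` itself: if `B` already joined the
distinct endpoints of `e`, then a minimal subset of `B` joining them would be nonempty, and by the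
exchange property (`reach_exchange`) each of its edges would have its endpoints joined by
`insert e B` minus that edge, so that this edge would not be a bridge of `insert e B`.
-/

open Finset

attribute [local instance] Classical.propDecidable

/-- A finite multigraph: vertex type `V`, edge type `E`, each edge carrying an
ordered pair of (possibly equal) endpoints (the order is an arbitrary orientation). -/
structure Multigraph (V E : Type) where
  ends : E → V × V

namespace Multigraph

variable {V E Fl : Type} {d : ℕ}

/-- `v` and `w` are joined by an edge of `A`. -/
def edgeRel (G : Multigraph V E) (A : Finset E) (v w : V) : Prop :=
  ∃ e ∈ A, G.ends e = (v, w) ∨ G.ends e = (w, v)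

/-- The partition of `V` into connected components of the spanning subgraph `(V, A)`. -/
def compSetoid (G : Multigraph V E) (A : Finset E) : Setoid V :=
  Relation.EqvGen.setoid (G.edgeRel A)

/-- `v` and `w` lie in the same connected component of the spanning subgraph `(V, A)`. -/
def Reach (G : Multigraph V E) (A : Finset E) (v w : V) : Prop :=
  Relation.EqvGen (G.edgeRel A) v w

/-- `k A`: the number of connected components of the spanning subgraph `(V, A)`. -/
noncomputable def k (G : Multigraph V E) (A : Finset E) : ℕ :=
  Nat.card (Quotient (G.compSetoid A))

/-- The rank `r(A) = |V| - k(A)` of the spanning subgraph `(V, A)`. -/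
noncomputable def rank (G : Multigraph V E) (A : Finset E) : ℕ :=
  Nat.card V - G.k A

/-- The nullity `n(A) = |A| + k(A) - |V|` of the spanning subgraph `(V, A)`. -/
noncomputable def nullity (G : Multigraph V E) (A : Finset E) : ℕ :=
  A.card + G.k A - Nat.card V

/-- A self-loop: both endpoints coincide. -/
def IsLoop (G : Multigraph V E) (e : E) : Prop :=
  (G.ends e).1 = (G.ends e).2

/-- A bridge: deleting the edge increases the number of connected components. -/
def IsBridge (G : Multigraph V E) [Fintype E] (e : E) : Prop :=
  G.k (Finset.univ.erase e) ≠ G.k Finset.univ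

/-- The Tutte polynomial, via the subset (rank–nullity) expansion. -/
noncomputable def tutte (G : Multigraph V E) [Fintype E] (x y : ℝ) : ℝ :=
  ∑ A : Finset E,
    (x - 1) ^ (G.rank Finset.univ - G.rank A) * (y - 1) ^ G.nullity A

/-- Deletion of the edge `e`. -/
def delete (G : Multigraph V E) (e : E) : Multigraph V {e' : E // e' ≠ e} :=
  ⟨fun e' => G.ends e'⟩

/-- The setoid identifying the two endpoints of `e`. -/
def contrSetoid (G : Multigraph V E) (e : E) : Setoid V :=
  Relation.EqvGen.setoid (fun v w => G.ends e = (v, w))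

/-- Contraction of the edge `e`: its endpoints are identified and `e` is removed.
(For a self-loop this yields a graph isomorphic to the deletion `G - e`,
in accordance with the convention `G/e = G - e` for self-loops.) -/
def contract (G : Multigraph V E) (e : E) :
    Multigraph (Quotient (G.contrSetoid e)) {e' : E // e' ≠ e} :=
  ⟨fun e' => (Quotient.mk _ (G.ends e'.1).1, Quotient.mk _ (G.ends e'.1).2)⟩

/-- The multivariate Tutte polynomial `Z_G(q, β)`. -/
noncomputable def multiTutte (G : Multigraph V E) [Fintype E] (q : ℝ) (β : E → ℝ) : ℝ :=
  ∑ A : Finset E, q ^ G.k A * ∏ e ∈ A, β e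

/-- `(V, A)` is acyclic (a forest): every edge of `A` is a bridge of `(V, A)`. -/
def IsForest (G : Multigraph V E) [DecidableEq E] (A : Finset E) : Prop :=
  ∀ e ∈ A, G.k (A.erase e) ≠ G.k A

/-- First Symanzik polynomial: sum over spanning trees `T` of `∏_{e ∉ T} α_e`. -/
noncomputable def treePoly (G : Multigraph V E) [Fintype E] [DecidableEq E] (α : E → ℝ) : ℝ :=
  ∑ A ∈ Finset.univ.filter (fun A => G.IsForest A ∧ G.k A = 1),
    ∏ e ∈ Finset.univ \ A, α e

/-- The total weight `q_C` of the component `c` of the spanning subgraph `(V, A)`. -/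
noncomputable def qComp (G : Multigraph V E) [Fintype V] (A : Finset E) (q : V → ℝ)
    (c : Quotient (G.compSetoid A)) : ℝ :=
  ∑ v ∈ Finset.univ.filter (fun v => Quotient.mk (G.compSetoid A) v = c), q v

/-- Generalized first Symanzik polynomial `𝒰_G(α, q)`. -/
noncomputable def genU (G : Multigraph V E) [Fintype V] [Fintype E] [DecidableEq E]
    (α : E → ℝ) (q : V → ℝ) : ℝ :=
  ∑ A ∈ Finset.univ.filter (fun A => G.IsForest A),
    (∏ e ∈ Finset.univ \ A, α e) * ∏ c : Quotient (G.compSetoid A), G.qComp A q c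

end Multigraph

/-- Euclidean dot product on `ℝ^d`. -/
def dotp {d : ℕ} (x y : Fin d → ℝ) : ℝ := ∑ i, x i * y i

/-- Total flag momentum `p_v` at the vertex `v`. -/
noncomputable def flagP {V Fl : Type} {d : ℕ} [Fintype Fl] (attach : Fl → V)
    (p : Fl → Fin d → ℝ) (v : V) : Fin d → ℝ :=
  ∑ f ∈ Finset.univ.filter (fun f => attach f = v), p f

namespace Multigraph

/-- Total momentum `p_C` of the component `c` of the spanning subgraph `(V, A)`. -/
noncomputable def pComp (G : Multigraph V E) [Fintype Fl] (A : Finset E) (attach : Fl → V)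
    (p : Fl → Fin d → ℝ) (c : Quotient (G.compSetoid A)) : Fin d → ℝ :=
  ∑ f ∈ Finset.univ.filter (fun f => Quotient.mk (G.compSetoid A) (attach f) = c), p f

/-- Generalized second Symanzik polynomial `𝒱_G(α, q, p)`. -/
noncomputable def genV (G : Multigraph V E) [Fintype V] [Fintype E] [DecidableEq E] [Fintype Fl]
    (α : E → ℝ) (q : V → ℝ) (attach : Fl → V) (p : Fl → Fin d → ℝ) : ℝ :=
  ∑ A ∈ Finset.univ.filter (fun A => G.IsForest A),
    (∏ e ∈ Finset.univ \ A, α e) *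
      ∑ c : Quotient (G.compSetoid A),
        dotp (G.pComp A attach p c) (G.pComp A attach p c) *
          ∏ c' ∈ Finset.univ.erase c, G.qComp A q c'

/-- Adding one new edge joining `v` and `v'`. -/
def addEdge (G : Multigraph V E) (v v' : V) : Multigraph V (Option E) :=
  ⟨fun e => e.elim (v, v') G.ends⟩

/-- Signed incidence matrix `ε_{ev}` (vanishing on self-loops). -/
noncomputable def eps (G : Multigraph V E) (e : E) (v : V) : ℝ :=
  (if (G.ends e).1 = v then 1 else 0) - (if (G.ends e).2 = v then 1 else 0)

end Multigraph

namespace Multigraph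

/-! ### Connectivity and forests -/

section Reach

variable {V E : Type}

theorem Reach.refl (G : Multigraph V E) (A : Finset E) (v : V) : G.Reach A v v :=
  Relation.EqvGen.refl v

theorem Reach.symm {G : Multigraph V E} {A : Finset E} {v w : V} (h : G.Reach A v w) :
    G.Reach A w v :=
  Relation.EqvGen.symm _ _ h

theorem Reach.trans {G : Multigraph V E} {A : Finset E} {u v w : V} (h : G.Reach A u v)
    (h' : G.Reach A v w) : G.Reach A u w :=
  Relation.EqvGen.trans _ _ _ h h'

theorem reach_ends (G : Multigraph V E) {A : Finset E} {f : E} (hf : f ∈ A) :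
    G.Reach A (G.ends f).1 (G.ends f).2 :=
  Relation.EqvGen.rel _ _ ⟨f, hf, Or.inl rfl⟩

/-- Reachability is the least equivalence relation joining the endpoints of each edge. -/
theorem Reach.lift {G : Multigraph V E} {A : Finset E} {r : V → V → Prop} (hr : Equivalence r)
    (h : ∀ f ∈ A, r (G.ends f).1 (G.ends f).2) {v w : V} (hvw : G.Reach A v w) : r v w := by
  induction hvw with
  | rel x y hxy =>
    obtain ⟨f, hf, h1 | h1⟩ := hxy
    · simpa [h1] using h f hf
    · exact hr.symm (by simpa [h1] using h f hf)
  | refl x => exact hr.refl x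
  | symm x y _ ih => exact hr.symm ih
  | trans x y z _ _ ih1 ih2 => exact hr.trans ih1 ih2

theorem equivalence_reach (G : Multigraph V E) (A : Finset E) : Equivalence (G.Reach A) :=
  ⟨Reach.refl G A, Reach.symm, Reach.trans⟩

theorem Reach.mono {G : Multigraph V E} {A B : Finset E} (hAB : A ⊆ B) {v w : V}
    (h : G.Reach A v w) : G.Reach B v w :=
  h.lift (G.equivalence_reach B) fun _ hf => G.reach_ends (hAB hf)

theorem mk_eq_mk_iff_reach (G : Multigraph V E) (A : Finset E) (v w : V) :
    Quotient.mk (G.compSetoid A) v = Quotient.mk (G.compSetoid A) w ↔ G.Reach A v w :=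
  Quotient.eq

/-- A walk in `insert f A` may be assumed to use the edge `f` at most once, in either direction. -/
theorem reach_insert [DecidableEq E] (G : Multigraph V E) {A : Finset E} {f : E} {v w : V}
    (h : G.Reach (insert f A) v w) :
    G.Reach A v w ∨ (G.Reach A v (G.ends f).1 ∧ G.Reach A (G.ends f).2 w) ∨
      (G.Reach A v (G.ends f).2 ∧ G.Reach A (G.ends f).1 w) := by
  refine Reach.lift (r := fun v w => G.Reach A v w ∨
    (G.Reach A v (G.ends f).1 ∧ G.Reach A (G.ends f).2 w) ∨
      (G.Reach A v (G.ends f).2 ∧ G.Reach A (G.ends f).1 w)) ⟨?_, ?_, ?_⟩ ?_ h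
  · exact fun x => Or.inl (Reach.refl G A x)
  · rintro x y (h | ⟨h, h'⟩ | ⟨h, h'⟩)
    · exact Or.inl h.symm
    · exact Or.inr (Or.inr ⟨h'.symm, h.symm⟩)
    · exact Or.inr (Or.inl ⟨h'.symm, h.symm⟩)
  · rintro x y z (h | ⟨h, h'⟩ | ⟨h, h'⟩) (k | ⟨k, k'⟩ | ⟨k, k'⟩)
    · exact Or.inl (h.trans k)
    · exact Or.inr (Or.inl ⟨h.trans k, k'⟩)
    · exact Or.inr (Or.inr ⟨h.trans k, k'⟩)
    · exact Or.inr (Or.inl ⟨h, h'.trans k⟩)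
    · exact Or.inr (Or.inl ⟨h, k'⟩)
    · exact Or.inl (h.trans k')
    · exact Or.inr (Or.inr ⟨h, h'.trans k⟩)
    · exact Or.inl (h.trans k')
    · exact Or.inr (Or.inr ⟨h, k'⟩)
  · intro g hg
    rcases Finset.mem_insert.1 hg with rfl | hg
    · exact Or.inr (Or.inl ⟨Reach.refl _ _ _, Reach.refl _ _ _⟩)
    · exact Or.inl (G.reach_ends hg)

/-- The exchange property: if adding `f` to `A` newly joins the endpoints of `e`, then adding `e`
to `A` joins the endpoints of `f`. -/
theorem reach_exchange [DecidableEq E] (G : Multigraph V E) {A : Finset E} {e f : E}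
    (h : G.Reach (insert f A) (G.ends e).1 (G.ends e).2)
    (h' : ¬ G.Reach A (G.ends e).1 (G.ends e).2) :
    G.Reach (insert e A) (G.ends f).1 (G.ends f).2 := by
  have hs : A ⊆ insert e A := Finset.subset_insert e A
  have he := G.reach_ends (Finset.mem_insert_self e A)
  rcases G.reach_insert h with h | ⟨h1, h2⟩ | ⟨h1, h2⟩
  · exact absurd h h'
  · exact (h1.symm.mono hs).trans (he.trans (h2.symm.mono hs))
  · exact ((h1.symm.mono hs).trans (he.trans (h2.symm.mono hs))).symm

/-- If `A` joins the endpoints of the non-loop `e`, then some `f ∈ A` has its endpoints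
joined by `A` with `f` replaced by `e`. -/
theorem exists_mem_reach_insert_erase [DecidableEq E] (G : Multigraph V E) {e : E}
    (hloop : ¬ G.IsLoop e) (A : Finset E) (h : G.Reach A (G.ends e).1 (G.ends e).2) :
    ∃ f ∈ A, G.Reach (insert e (A.erase f)) (G.ends f).1 (G.ends f).2 := by
  induction A using Finset.strongInduction with
  | H A ih =>
    rcases A.eq_empty_or_nonempty with rfl | ⟨f, hf⟩
    · exact absurd (h.lift (r := Eq) ⟨fun _ => rfl, Eq.symm, Eq.trans⟩ (by simp)) hloop
    · by_cases hA : G.Reach (A.erase f) (G.ends e).1 (G.ends e).2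
      · obtain ⟨g, hg, hr⟩ := ih _ (Finset.erase_ssubset hf) hA
        exact ⟨g, Finset.mem_of_mem_erase hg, hr.mono (Finset.insert_subset_insert _
          (Finset.erase_subset_erase _ (Finset.erase_subset _ _)))⟩
      · exact ⟨f, hf, G.reach_exchange (by rwa [Finset.insert_erase hf]) hA⟩

/-- Removing an edge keeps the number of components iff its endpoints stay joined. -/
theorem k_erase_eq_iff [Finite V] [DecidableEq E] (G : Multigraph V E) {A : Finset E} {f : E}
    (hf : f ∈ A) : G.k (A.erase f) = G.k A ↔ G.Reach (A.erase f) (G.ends f).1 (G.ends f).2 := by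
  constructor
  · intro h
    have hle : ∀ v w, G.Reach (A.erase f) v w → G.Reach A v w :=
      fun v w => Reach.mono (Finset.erase_subset _ _)
    let φ : Quotient (G.compSetoid (A.erase f)) → Quotient (G.compSetoid A) :=
      Quotient.map id hle
    have hsurj : Function.Surjective φ := by
      rintro ⟨v⟩
      exact ⟨Quotient.mk _ v, rfl⟩
    -- a surjection between finite sets of equal cardinality is injective
    have hbij : Function.Bijective φ := (Nat.bijective_iff_surjective_and_card φ).2 ⟨hsurj, h⟩
    rw [← mk_eq_mk_iff_reach]
    exact hbij.1 ((G.mk_eq_mk_iff_reach A _ _).2 (G.reach_ends hf))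
  · intro h
    have : G.compSetoid (A.erase f) = G.compSetoid A := by
      refine Setoid.ext fun v w => ⟨Reach.mono (Finset.erase_subset _ _), fun hvw => ?_⟩
      refine Reach.lift (G.equivalence_reach (A.erase f)) (fun g hg => ?_) hvw
      by_cases hgf : g = f
      · rwa [hgf]
      · exact G.reach_ends (Finset.mem_erase.2 ⟨hgf, hg⟩)
    rw [k, k, this]

theorem isForest_iff [Finite V] [DecidableEq E] (G : Multigraph V E) (A : Finset E) :
    G.IsForest A ↔ ∀ f ∈ A, ¬ G.Reach (A.erase f) (G.ends f).1 (G.ends f).2 :=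
  forall₂_congr fun _ hf => not_congr (G.k_erase_eq_iff hf)

end Reach

/-! ### Connectivity and forests in `G - e` and `G / e` -/

section Minor

variable {V E : Type}

/-- A set of edges of `G - e` or `G / e`, seen as a set of edges of `G`. -/
def lift {e : E} (B : Finset {e' : E // e' ≠ e}) : Finset E :=
  B.map (Function.Embedding.subtype _)

theorem mem_lift {e : E} {B : Finset {e' : E // e' ≠ e}} {f : E} :
    f ∈ lift B ↔ ∃ h : f ≠ e, (⟨f, h⟩ : {e' : E // e' ≠ e}) ∈ B := by
  simp [lift]

theorem self_notMem_lift {e : E} (B : Finset {e' : E // e' ≠ e}) : e ∉ lift B := by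
  simp [mem_lift]

theorem lift_erase [DecidableEq E] {e : E} [DecidableEq {e' : E // e' ≠ e}]
    (B : Finset {e' : E // e' ≠ e})
    (f : {e' : E // e' ≠ e}) : lift (B.erase f) = (lift B).erase f.1 := by
  ext g
  simp only [mem_lift, Finset.mem_erase, ne_eq, Subtype.ext_iff]
  tauto

theorem reach_delete (G : Multigraph V E) (e : E) (B : Finset {e' : E // e' ≠ e}) (v w : V) :
    (G.delete e).Reach B v w ↔ G.Reach (lift B) v w := by
  constructor
  · intro h
    refine Reach.lift (G := G.delete e) (G.equivalence_reach _) (fun f hf => ?_) h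
    exact G.reach_ends (mem_lift.2 ⟨f.2, hf⟩)
  · refine Reach.lift ((G.delete e).equivalence_reach _) fun f hf => ?_
    obtain ⟨h, hf⟩ := mem_lift.1 hf
    exact (G.delete e).reach_ends hf

theorem reach_contract [DecidableEq E] (G : Multigraph V E) (e : E)
    (B : Finset {e' : E // e' ≠ e}) (v w : V) :
    (G.contract e).Reach B (Quotient.mk _ v) (Quotient.mk _ w) ↔
      G.Reach (insert e (lift B)) v w := by
  constructor
  · -- reachability by `insert e B` descends to a relation on the vertices of `G / e`
    have hwd : ∀ x y, (G.contrSetoid e) x y → G.Reach (insert e (lift B)) x y := by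
      intro x y h
      induction h with
      | rel x y h => simpa [h] using G.reach_ends (Finset.mem_insert_self e (lift B))
      | refl x => exact Reach.refl _ _ x
      | symm x y _ ih => exact ih.symm
      | trans x y z _ _ ih1 ih2 => exact ih1.trans ih2
    let φ : Quotient (G.contrSetoid e) → Quotient (G.compSetoid (insert e (lift B))) :=
      Quotient.map id hwd
    intro h
    rw [← mk_eq_mk_iff_reach]
    refine Reach.lift (r := fun c c' => φ c = φ c') ⟨fun _ => rfl, Eq.symm, Eq.trans⟩ ?_ h
    intro f hf
    exact (G.mk_eq_mk_iff_reach _ _ _).2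
      (G.reach_ends (Finset.mem_insert_of_mem (mem_lift.2 ⟨f.2, hf⟩)))
  · refine Reach.lift (r := fun v w => (G.contract e).Reach B (Quotient.mk _ v) (Quotient.mk _ w))
      ⟨fun _ => Reach.refl _ _ _, Reach.symm, Reach.trans⟩ fun f hf => ?_
    rcases Finset.mem_insert.1 hf with rfl | hf
    · have : (Quotient.mk (G.contrSetoid f) (G.ends f).1) = Quotient.mk _ (G.ends f).2 :=
        Quotient.sound (Relation.EqvGen.rel _ _ rfl)
      rw [this]
      exact Reach.refl _ _ _
    · obtain ⟨h, hf⟩ := mem_lift.1 hf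
      exact (G.contract e).reach_ends hf

theorem isForest_delete [Finite V] [DecidableEq E] (G : Multigraph V E) (e : E)
    [DecidableEq {e' : E // e' ≠ e}] (B : Finset {e' : E // e' ≠ e}) :
    (G.delete e).IsForest B ↔ G.IsForest (lift B) := by
  simp only [isForest_iff, reach_delete, lift_erase, mem_lift]
  exact ⟨fun h f ⟨hf, hB⟩ => h ⟨f, hf⟩ hB, fun h f hf => h f ⟨f.2, hf⟩⟩

theorem isForest_contract [Finite V] [DecidableEq E] (G : Multigraph V E) {e : E}
    (hloop : ¬ G.IsLoop e)
    [DecidableEq {e' : E // e' ≠ e}] (B : Finset {e' : E // e' ≠ e}) :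
    (G.contract e).IsForest B ↔ G.IsForest (insert e (lift B)) := by
  have key : ∀ f : {e' : E // e' ≠ e},
      (G.contract e).Reach (B.erase f) ((G.contract e).ends f).1 ((G.contract e).ends f).2 ↔
        G.Reach ((insert e (lift B)).erase f.1) (G.ends f.1).1 (G.ends f.1).2 := by
    intro f
    rw [Finset.erase_insert_of_ne f.2.symm, ← lift_erase]
    exact G.reach_contract e _ _ _
  rw [isForest_iff, isForest_iff]
  constructor
  · intro h f hf
    rcases Finset.mem_insert.1 hf with rfl | hf
    · rw [Finset.erase_insert (self_notMem_lift B)]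
      intro hr
      obtain ⟨g, hg, hgr⟩ := G.exists_mem_reach_insert_erase hloop _ hr
      obtain ⟨hne, hg⟩ := mem_lift.1 hg
      refine h ⟨g, hne⟩ hg ((key ⟨g, hne⟩).2 ?_)
      rwa [Finset.erase_insert_of_ne hne.symm]
    · obtain ⟨hne, hB⟩ := mem_lift.1 hf
      exact fun hr => h ⟨f, hne⟩ hB ((key ⟨f, hne⟩).2 hr)
  · intro h f hf hr
    exact h f.1 (Finset.mem_insert_of_mem (mem_lift.2 ⟨f.2, hf⟩)) ((key f).1 hr)

/-- A subset of `E` is either `B` or `insert e B` for a unique `B` avoiding `e`. -/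
theorem sum_finset_eq [Fintype E] [DecidableEq E] (e : E) (F : Finset E → ℝ) :
    ∑ A, F A = ∑ B : Finset {e' : E // e' ≠ e}, F (lift B) +
      ∑ B : Finset {e' : E // e' ≠ e}, F (insert e (lift B)) := by
  have hsub : ∀ B : Finset {e' : E // e' ≠ e}, (lift B).subtype (· ≠ e) = B := by
    intro B
    ext f
    simp [mem_lift, f.2]
  have hlift : ∀ A : Finset E, lift (A.subtype (· ≠ e)) = A.erase e := by
    intro A
    ext f
    simp [mem_lift]
  rw [← Finset.sum_filter_not_add_sum_filter Finset.univ (fun A => e ∈ A)]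
  congr 1
  · refine Finset.sum_nbij' (fun A => A.subtype (· ≠ e)) lift ?_ ?_ ?_ ?_ ?_
    · simp
    · simp [self_notMem_lift]
    · intro A hA
      rw [hlift, Finset.erase_eq_of_notMem (by simpa using hA)]
    · exact fun B _ => hsub B
    · intro A hA
      rw [hlift, Finset.erase_eq_of_notMem (by simpa using hA)]
  · refine Finset.sum_nbij' (fun A => A.subtype (· ≠ e)) (fun B => insert e (lift B)) ?_ ?_ ?_ ?_ ?_
    · simp
    · simp
    · intro A hA
      rw [hlift, Finset.insert_erase (by simpa using hA)]
    · intro B _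
      ext f
      simp [mem_lift, f.2]
    · intro A hA
      rw [hlift, Finset.insert_erase (by simpa using hA)]

theorem prod_compl_insert_lift [Fintype E] [DecidableEq E] (e : E)
    [DecidableEq {e' : E // e' ≠ e}] [Fintype {e' : E // e' ≠ e}]
    (B : Finset {e' : E // e' ≠ e}) (α : E → ℝ) :
    ∏ f ∈ Finset.univ \ insert e (lift B), α f = ∏ f ∈ Finset.univ \ B, α f.1 := by
  have : Finset.univ \ insert e (lift B) = lift (Finset.univ \ B) := by
    ext f
    by_cases hf : f = e <;> simp [mem_lift, hf]
  rw [this, lift, Finset.prod_map]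
  rfl

theorem prod_compl_lift [Fintype E] [DecidableEq E] (e : E)
    [DecidableEq {e' : E // e' ≠ e}] [Fintype {e' : E // e' ≠ e}]
    (B : Finset {e' : E // e' ≠ e}) (α : E → ℝ) :
    ∏ f ∈ Finset.univ \ lift B, α f = α e * ∏ f ∈ Finset.univ \ B, α f.1 := by
  rw [← prod_compl_insert_lift e B α, Finset.sdiff_insert]
  exact (Finset.mul_prod_erase _ _ (by simp [self_notMem_lift])).symm

end Minor

/-! ### The contribution of a forest -/

section CompVal

variable {V Fl C C' : Type} {d : ℕ}

/-- The sum `∑_c p_c² ∏_{c' ≠ c} q_{c'}` over a set `C` of components, where `π v` is the component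
of the vertex `v`. Allowing an arbitrary map `π` rather than a quotient map makes it possible to
compare components of different graphs. -/
noncomputable def compVal [Fintype V] [Fintype Fl] [Fintype C] (π : V → C) (q : V → ℝ)
    (attach : Fl → V) (p : Fl → Fin d → ℝ) : ℝ :=
  ∑ c : C, dotp (∑ f with π (attach f) = c, p f) (∑ f with π (attach f) = c, p f) *
    ∏ c' ∈ Finset.univ.erase c, ∑ v with π v = c', q v

theorem compVal_equiv [Fintype V] [Fintype Fl] [Fintype C] [Fintype C'] (σ : C ≃ C')
    (π : V → C) (π' : V → C') (h : ∀ v, π' v = σ (π v)) (q : V → ℝ) (attach : Fl → V)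
    (p : Fl → Fin d → ℝ) : compVal π' q attach p = compVal π q attach p := by
  unfold compVal
  refine (Fintype.sum_equiv σ _ _ fun c => ?_).symm
  simp only [h, σ.injective.eq_iff]
  congr 1
  refine Finset.prod_equiv σ (by simp) fun c' _ => ?_
  simp only [σ.injective.eq_iff]

/-- Two surjections from the vertices with the same fibres define the same sum. -/
theorem compVal_congr [Fintype V] [Fintype Fl] [Fintype C] [Fintype C']
    {π : V → C} {π' : V → C'} (hπ : Function.Surjective π) (hπ' : Function.Surjective π')
    (h : ∀ v w, π v = π w ↔ π' v = π' w) (q : V → ℝ) (attach : Fl → V)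
    (p : Fl → Fin d → ℝ) : compVal π' q attach p = compVal π q attach p := by
  have hspec : ∀ v, π' (Function.surjInv hπ (π v)) = π' v :=
    fun v => (h _ _).1 (Function.surjInv_eq hπ _)
  refine compVal_equiv (Equiv.ofBijective (fun c => π' (Function.surjInv hπ c)) ⟨?_, ?_⟩) π π'
    (fun v => (hspec v).symm) q attach p
  · intro c c' hc
    simpa only [Function.surjInv_eq] using (h _ _).2 hc
  · intro c'
    obtain ⟨v, rfl⟩ := hπ' c'
    exact ⟨π v, hspec v⟩

/-- Collecting the weights along `ρ` and then along `π` is collecting them along `π ∘ ρ`. -/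
theorem compVal_comp {W : Type} [Fintype V] [Fintype W] [DecidableEq W] [Fintype Fl] [Fintype C] (ρ : V → W)
    (π : W → C) (q : V → ℝ) (attach : Fl → V) (p : Fl → Fin d → ℝ) :
    compVal π (fun w => ∑ v with ρ v = w, q v) (fun f => ρ (attach f)) p =
      compVal (fun v => π (ρ v)) q attach p := by
  unfold compVal
  refine Finset.sum_congr rfl fun c _ => ?_
  congr 1
  refine Finset.prod_congr rfl fun c' _ => ?_
  rw [← Finset.sum_fiberwise_of_maps_to (s := Finset.univ.filter fun v => π (ρ v) = c')
    (t := Finset.univ.filter fun w => π w = c') (g := ρ) (by simp)]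
  refine Finset.sum_congr rfl fun w hw => Finset.sum_congr ?_ fun _ _ => rfl
  ext v
  simp only [Finset.mem_filter, Finset.mem_univ, true_and] at hw ⊢
  exact ⟨fun h => ⟨h ▸ hw, h⟩, And.right⟩

theorem genV_eq {E : Type} [Fintype V] [Fintype E] [DecidableEq E] [Fintype Fl]
    (G : Multigraph V E) (α : E → ℝ) (q : V → ℝ) (attach : Fl → V) (p : Fl → Fin d → ℝ) :
    G.genV α q attach p = ∑ A, if G.IsForest A then
      (∏ e ∈ Finset.univ \ A, α e) * compVal (Quotient.mk (G.compSetoid A)) q attach p else 0 := by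
  unfold genV compVal pComp qComp
  rw [Finset.sum_filter]
  congr!

end CompVal

end Multigraph

/-! ### Deletion–contraction -/

open Multigraph

/-- deletion–contraction for the generalized second Symanzik polynomial
at a semi-regular edge; the merged vertex of `G/e` carries the weight `q_{v₁} + q_{v₂}`
and the union of the flags of `v₁` and `v₂`. -/
theorem genV_deletion_contraction {V E Fl : Type} {d : ℕ}
    [Fintype V] [Fintype E] [DecidableEq E] [Fintype Fl]
    (G : Multigraph V E) (e : E) (hloop : ¬ G.IsLoop e)
    (α : E → ℝ) (q : V → ℝ) (attach : Fl → V) (p : Fl → Fin d → ℝ) :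
    G.genV α q attach p
      = α e * (G.delete e).genV (fun e' => α e'.1) q attach p
        + (G.contract e).genV (fun e' => α e'.1)
            (fun c => ∑ v ∈ Finset.univ.filter
              (fun v => Quotient.mk (G.contrSetoid e) v = c), q v)
            (fun f => Quotient.mk (G.contrSetoid e) (attach f)) p := by
  rw [genV_eq, genV_eq, genV_eq, sum_finset_eq e, Finset.mul_sum]
  congr 1
  · refine Finset.sum_congr rfl fun B _ => ?_
    rw [prod_compl_lift, mul_ite, mul_zero]
    refine if_congr (G.isForest_delete e B).symm ?_ rfl
    rw [mul_assoc, compVal_congr (π := Quotient.mk ((G.delete e).compSetoid B))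
      Quotient.mk_surjective Quotient.mk_surjective fun v w => ?_]
    rw [mk_eq_mk_iff_reach, mk_eq_mk_iff_reach, reach_delete]
  · refine Finset.sum_congr rfl fun B _ => ?_
    rw [prod_compl_insert_lift]
    refine if_congr (G.isForest_contract hloop B).symm ?_ rfl
    rw [compVal_comp (Quotient.mk (G.contrSetoid e)),
      compVal_congr (π' := Quotient.mk (G.compSetoid (insert e (lift B))))
      (π := fun v => Quotient.mk ((G.contract e).compSetoid B) (Quotient.mk (G.contrSetoid e) v))
      (Quotient.mk_surjective.comp Quotient.mk_surjective) Quotient.mk_surjective fun v w => ?_]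
    exact ((mk_eq_mk_iff_reach _ _ _ _).trans (G.reach_contract e B v w)).trans
      (mk_eq_mk_iff_reach _ _ _ _).symm
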